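/- For every integer d ≥ 2, 1 − e^{−d}·∑_{i=d}^{∞} (i − d + 1)·d^{i−1}/i! ≥ 1 − 1/√(2πd) − 1/d. -/

import Mathlib

/-!
For `x ≠ 0`, the `i`-th term splits as
`(i - x + 1) x ^ (i - 1) / i! = (x ^ (i - 1) / (i - 1)! - x ^ i / i!) + (x ^ i / i!) / x`:
a telescoping part plus a multiple of the exponential series. For `x = d` and a Poisson variable
`N` of mean `d`, summing over `i ≥ d` gives `ℙ(N = d - 1) + ℙ(N ≥ d) / d` after multiplication by
`e⁻ᵈ`. Since `ℙ(N = d - 1) = ℙ(N = d)`, Stirling's lower bound for `d!` controls the first summand,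
and the second is at most `1 / d`.
-/

open Finset
open scoped Nat

theorem hasSum_ite_le_iff_hasSum_nat_add {M : Type*} [AddCommMonoid M] [TopologicalSpace M]
    {f : ℕ → M} {a : M} (k : ℕ) :
    HasSum (fun i ↦ if k ≤ i then f i else 0) a ↔ HasSum (fun n ↦ f (n + k)) a := by
  have zero_off_range : ∀ i ∉ Set.range (· + k), (if k ≤ i then f i else 0) = 0 :=
    fun i hi ↦ if_neg fun hki ↦ hi ⟨i - k, Nat.sub_add_cancel hki⟩
  rw [← (add_left_injective k).hasSum_iff zero_off_range]
  simp only [Function.comp_def, Nat.le_add_left, if_true]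

section Field

variable {K : Type*} [Field K] [CharZero K]

theorem sub_add_one_mul_pow_div_factorial_succ {x : K} (hx : x ≠ 0) (k : ℕ) :
    ((k + 1 : ℕ) - x + 1) * x ^ k / (k + 1)! =
      x ^ k / (k ! : K) - x ^ (k + 1) / (k + 1)! + x ^ (k + 1) / (k + 1)! / x := by
  have factorial_ne_zero : (k ! : K) ≠ 0 := mod_cast k.factorial_ne_zero
  have succ_ne_zero : (k + 1 : K) ≠ 0 := mod_cast k.succ_ne_zero
  rw [Nat.factorial_succ, pow_succ]
  push_cast
  field_simp

theorem cast_succ_pow_succ_div_factorial_succ (k : ℕ) :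
    ((k + 1 : ℕ) : K) ^ (k + 1) / (k + 1)! = ((k + 1 : ℕ) : K) ^ k / k ! := by
  have succ_ne_zero : ((k + 1 : ℕ) : K) ≠ 0 := mod_cast k.succ_ne_zero
  rw [Nat.factorial_succ, pow_succ', Nat.cast_mul, mul_div_mul_left _ _ succ_ne_zero]

end Field

section NormedField

variable {K : Type*} [NormedField K] [NormedAlgebra ℚ K] [CompleteSpace K]

theorem hasSum_nat_add_pow_div_factorial (x : K) (k : ℕ) :
    HasSum (fun n ↦ x ^ (n + k) / (n + k)!)
      (NormedSpace.exp x - ∑ i ∈ range k, x ^ i / i !) :=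
  (hasSum_nat_add_iff' k).2 (NormedSpace.expSeries_div_hasSum_exp x)

theorem hasSum_sub_add_one_mul_pow_div_factorial {x : K} (hx : x ≠ 0) (k : ℕ) :
    HasSum (fun n ↦ ((n + k + 1 : ℕ) - x + 1) * x ^ (n + k) / (n + k + 1)!)
      (x ^ k / k ! + (NormedSpace.exp x - ∑ i ∈ range (k + 1), x ^ i / i !) / x) := by
  have : CharZero K := algebraRat.charZero K
  have tail := hasSum_nat_add_pow_div_factorial x (k + 1)
  have telescoping : HasSum (fun n ↦ x ^ (n + k) / (n + k)! - x ^ (n + (k + 1)) / (n + (k + 1))!)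
      (x ^ k / k !) := by
    simpa only [sum_range_succ, sub_sub_sub_cancel_left, add_sub_cancel_left] using
      (hasSum_nat_add_pow_div_factorial x k).sub tail
  simp_rw [sub_add_one_mul_pow_div_factorial_succ hx]
  exact telescoping.add (tail.div_const x)

end NormedField

theorem tsum_sub_add_one_mul_pow_div_factorial {d : ℕ} (hd : d ≠ 0) :
    (∑' i : ℕ, if d ≤ i then ((i : ℝ) - d + 1) * (d : ℝ) ^ (i - 1) / i ! else 0) =
      (d : ℝ) ^ d / d ! + (Real.exp d - ∑ i ∈ range d, (d : ℝ) ^ i / i !) / d := by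
  obtain ⟨k, rfl⟩ := Nat.exists_eq_succ_of_ne_zero hd
  rw [cast_succ_pow_succ_div_factorial_succ, Real.exp_eq_exp_ℝ]
  refine ((hasSum_ite_le_iff_hasSum_nat_add (k + 1)).2 ?_).tsum_eq
  exact hasSum_sub_add_one_mul_pow_div_factorial (Nat.cast_ne_zero.2 hd) k

theorem exp_neg_mul_pow_div_factorial_le_one_div_sqrt {d : ℕ} (hd : d ≠ 0) :
    Real.exp (-d) * ((d : ℝ) ^ d / d !) ≤ 1 / √(2 * Real.pi * d) := by
  have sqrt_pos : 0 < √(2 * Real.pi * d) := by positivity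
  rw [le_div_iff₀ sqrt_pos, ← mul_div_assoc, div_mul_eq_mul_div,
    div_le_one (mod_cast d.factorial_pos)]
  calc Real.exp (-d) * (d : ℝ) ^ d * √(2 * Real.pi * d)
      = √(2 * Real.pi * d) * (d / Real.exp 1) ^ d := by
        rw [div_pow, ← Real.exp_nat_mul, mul_one, Real.exp_neg]
        ring
    _ ≤ d ! := Stirling.le_factorial_stirling d

theorem exp_neg_mul_exp_sub_sum_le_one {x : ℝ} (hx : 0 ≤ x) (k : ℕ) :
    Real.exp (-x) * (Real.exp x - ∑ i ∈ range k, x ^ i / i !) ≤ 1 := by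
  have partial_sum_nonneg : 0 ≤ ∑ i ∈ range k, x ^ i / i ! := by positivity
  calc Real.exp (-x) * (Real.exp x - ∑ i ∈ range k, x ^ i / i !)
      ≤ Real.exp (-x) * Real.exp x := by gcongr; exact sub_le_self _ partial_sum_nonneg
    _ = 1 := by rw [← Real.exp_add, neg_add_cancel, Real.exp_zero]

/-- For every integer `d ≥ 2`,
`1 − e^{−d}·∑_{i=d}^{∞} (i − d + 1)·d^{i−1}/i! ≥ 1 − 1/√(2πd) − 1/d`. -/
theorem stmt16 (d : ℕ) (hd : 2 ≤ d) :
    1 - Real.exp (-(d : ℝ)) *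
        (∑' i : ℕ, if d ≤ i then ((i : ℝ) - (d : ℝ) + 1) * (d : ℝ) ^ (i - 1) / (Nat.factorial i) else 0)
      ≥ 1 - 1 / Real.sqrt (2 * Real.pi * d) - 1 / (d : ℝ) := by
  have d_ne_zero : d ≠ 0 := by lia
  have point_mass := exp_neg_mul_pow_div_factorial_le_one_div_sqrt d_ne_zero
  have tail_mass :
      Real.exp (-d) * ((Real.exp d - ∑ i ∈ range d, (d : ℝ) ^ i / i !) / d) ≤ 1 / d := by
    rw [← mul_div_assoc]
    gcongr
    exact exp_neg_mul_exp_sub_sum_le_one d.cast_nonneg d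
  rw [tsum_sub_add_one_mul_pow_div_factorial d_ne_zero, mul_add]
  linarith
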